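/- Let V be a Z₂-graded vector space over a field k of characteristic zero, let v₁,…,v_n be homogeneous elements of V, let w_i denote v_i regarded as an element of the parity reversion ΠV (so |w_i| = |v_i| + 1 mod 2), and let σ be a permutation of n letters. Then (−1)^{Σ_{i=1}^{n−1}(n−i)|v_i|} · sgn(σ) · ε(σ; v₁,…,v_n) = (−1)^{Σ_{i=1}^{n−1}(n−i)|v_{σ(i)}|} · ε(σ; w₁,…,w_n). -/

import Mathlib

/-!
Both sides are products over the pairs `i < j`. Since `n - 1 - i` counts the `j > i`, the factor
`(-1) ^ ∑ (n - 1 - i) |v_i|` is `∏_{i < j} (-1) ^ |v_i|` (`neg_one_pow_sum_eq_prod_pairs`). The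
antisymmetric function `F` with `F i j = (-1) ^ |v_i|` for `i < j` (`pairSign`) turns
`sgn σ * ∏_{i < j} (-1) ^ |v_i|` into `∏_{i < j} F (σ i) (σ j)`. The identity can then be checked
pair by pair: at a non-inversion both sides are `(-1) ^ |v_{σ i}|`, and at an inversion, writing
`a = |v_{σ i}|` and `b = |v_{σ j}|`, it is `-(-1) ^ b (-1) ^ (a b) = (-1) ^ a (-1) ^ ((a+1)(b+1))`.
-/

/-- The Koszul sign `ε(σ; v₁,…,v_n)` of a permutation `σ` acting on homogeneous elements
whose parities are `g : Fin n → ZMod 2`: the product over the inversions of `σ` of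
`(−1)^{|v_{σ(i)}||v_{σ(j)}|}`. -/
def koszulSign {n : ℕ} (σ : Equiv.Perm (Fin n)) (g : Fin n → ZMod 2) : ℤ :=
  ∏ q ∈ Finset.univ.filter (fun q : Fin n × Fin n => q.1 < q.2 ∧ σ q.2 < σ q.1),
    (-1 : ℤ) ^ ((g (σ q.1)) * (g (σ q.2))).val

/-- The antisymmetric function of two positions equal to `(-1) ^ |v_i|` at `(i, j)` with `i < j`. -/
def pairSign {n : ℕ} (g : Fin n → ZMod 2) (i j : Fin n) : ℤ :=
  if i < j then (-1) ^ (g i).val else if j < i then -(-1) ^ (g j).val else 0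

lemma pairSign_antisymm {n : ℕ} (g : Fin n → ZMod 2) (i j : Fin n) :
    pairSign g i j = -pairSign g j i := by
  unfold pairSign
  rcases lt_trichotomy i j with h | h | h
  · simp [h, h.not_gt]
  · simp [h]
  · simp [h, h.not_gt]

lemma neg_one_pow_sum_eq_prod_pairs {n : ℕ} (g : Fin n → ZMod 2) :
    (-1 : ℤ) ^ (∑ i : Fin n, (n - 1 - (i : ℕ)) * (g i).val) =
      ∏ i, ∏ _j ∈ Finset.Ioi i, (-1 : ℤ) ^ (g i).val := by
  rw [← Finset.prod_pow_eq_pow_sum]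
  refine Finset.prod_congr rfl fun i _ => ?_
  rw [Finset.prod_const, Fin.card_Ioi, ← pow_mul, mul_comm]

lemma koszulSign_eq_prod_pairs {n : ℕ} (σ : Equiv.Perm (Fin n)) (g : Fin n → ZMod 2) :
    koszulSign σ g = ∏ i, ∏ j ∈ Finset.Ioi i,
      if σ j < σ i then (-1 : ℤ) ^ (g (σ i) * g (σ j)).val else 1 := by
  unfold koszulSign
  rw [Finset.prod_filter, Fintype.prod_prod_type]
  refine Finset.prod_congr rfl fun i _ => ?_
  have hIoi : Finset.Ioi i = Finset.univ.filter (fun j => i < j) := by ext; simp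
  rw [hIoi, Finset.prod_filter]
  refine Finset.prod_congr rfl fun j _ => ?_
  rw [ite_and]

lemma inversion_factor (a b : ZMod 2) :
    -(-1 : ℤ) ^ b.val * (-1) ^ (a * b).val = (-1) ^ a.val * (-1) ^ ((a + 1) * (b + 1)).val := by
  revert a b
  decide

/-- for homogeneous `v₁,…,v_n` in a Z₂-graded vector space, with `w_i = v_i`
regarded in the parity reversion `ΠV` (so `|w_i| = |v_i| + 1`), and any permutation `σ`:
`(−1)^{Σ (n−i)|v_i|} · sgn(σ) · ε(σ; v) = (−1)^{Σ (n−i)|v_{σ(i)}|} · ε(σ; w)`. -/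
theorem parity_reversion_sign {K V : Type*} [Field K] [CharZero K]
    [AddCommGroup V] [Module K V]
    (Vg : ZMod 2 → Submodule K V) (hVg : DirectSum.IsInternal Vg)
    {n : ℕ} (g : Fin n → ZMod 2) (v : Fin n → V)
    (hv : ∀ i, v i ∈ Vg (g i)) (σ : Equiv.Perm (Fin n)) :
    ((-1 : ℤ) ^ (∑ i : Fin n, (n - 1 - (i : ℕ)) * (g i).val)) *
        (Equiv.Perm.sign σ : ℤ) * koszulSign σ g =
      ((-1 : ℤ) ^ (∑ i : Fin n, (n - 1 - (i : ℕ)) * (g (σ i)).val)) *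
        koszulSign σ (fun i => g i + 1) := by
  have hsign : (-1 : ℤ) ^ (∑ i : Fin n, (n - 1 - (i : ℕ)) * (g i).val) * (Equiv.Perm.sign σ : ℤ) =
      ∏ i, ∏ j ∈ Finset.Ioi i, pairSign g (σ i) (σ j) := by
    rw [σ.prod_Ioi_comp_eq_sign_mul_prod (pairSign_antisymm g), neg_one_pow_sum_eq_prod_pairs,
      mul_comm, Int.cast_id]
    congr 1
    refine Finset.prod_congr rfl fun i _ => Finset.prod_congr rfl fun j hj => ?_
    rw [pairSign, if_pos (Finset.mem_Ioi.mp hj)]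
  rw [hsign, neg_one_pow_sum_eq_prod_pairs (fun i => g (σ i)), koszulSign_eq_prod_pairs,
    koszulSign_eq_prod_pairs]
  simp only [← Finset.prod_mul_distrib]
  refine Finset.prod_congr rfl fun i _ => Finset.prod_congr rfl fun j hj => ?_
  have hne : σ i ≠ σ j := σ.injective.ne (Finset.mem_Ioi.mp hj).ne
  rcases hne.lt_or_gt with h | h
  · simp [pairSign, h, h.not_gt]
  · simp only [pairSign, h, h.not_gt, if_true, if_false]
    exact inversion_factor _ _
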